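/- In any nondegenerate triangle, the distance from the centroid X2 to the incenter X1 and the distance from X2 to the symmedian point X6 satisfy (6√2 − 8)·dist(X2, X6) ≤ dist(X2, X1) ≤ dist(X2, X6). -/

import Mathlib

/-- The point with normalized barycentric coordinates `(x : y : z)`
with respect to the triangle `A B C`. -/
noncomputable def bary (A B C : EuclideanSpace ℝ (Fin 2)) (x y z : ℝ) :
    EuclideanSpace ℝ (Fin 2) :=
  (x + y + z)⁻¹ • (x • A + y • B + z • C)

/-- The triangle center with barycentric coordinates
`(f a b c : f b c a : f c a b)` where `a, b, c` are the side lengths. -/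
noncomputable def tcenter (f : ℝ → ℝ → ℝ → ℝ) (A B C : EuclideanSpace ℝ (Fin 2)) :
    EuclideanSpace ℝ (Fin 2) :=
  bary A B C (f (dist B C) (dist C A) (dist A B))
    (f (dist C A) (dist A B) (dist B C))
    (f (dist A B) (dist B C) (dist C A))

/-!
After clearing denominators, both squared distances become symmetric forms in the side lengths.
Let the longest side be `2 * e + f` and the other two `e + f + d` and `e + f - d`, so that
`e, f ≥ 0` and `d ^ 2 ≤ e ^ 2`. Each form is then its value on the isosceles triangle `d = 0` plus
`d ^ 2` times a remainder, and the two parts can be compared separately. For an isosceles triangle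
the ratio of the distances is `(6e² + 8ef + 3f²) / ((4e + 3f)(3e + 2f)) ≤ 1`, whose minimum
`6√2 - 8` is attained at `f = √2 e`. The ratio of the remainders lies between
`1 / 4 ≥ (6√2 - 8)²` and `1`.
-/

/-- The triangle center with barycentric coordinates `(f a b c : f b c a : f c a b)` of a triangle
in an arbitrary real vector space with a distance; the analogue of `tcenter` outside the plane. -/
noncomputable def triangleCenter {V : Type*} [AddCommGroup V] [Module ℝ V] [Dist V]
    (f : ℝ → ℝ → ℝ → ℝ) (A B C : V) : V :=
  Finset.univ.centerMass
    ![f (dist B C) (dist C A) (dist A B), f (dist C A) (dist A B) (dist B C),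
      f (dist A B) (dist B C) (dist C A)] ![A, B, C]

lemma tcenter_eq_triangleCenter : tcenter = triangleCenter := by
  funext f A B C
  simp [tcenter, bary, triangleCenter, Finset.centerMass, Fin.sum_univ_three]

/-- The form equal to `9 * (a + b + c) * dist X2 X1 ^ 2` on triangles with side lengths
`a, b, c`. -/
def incenterForm (a b c : ℝ) : ℝ :=
  -(a ^ 3 + b ^ 3 + c ^ 3)
    + 2 * (a ^ 2 * b + a ^ 2 * c + b ^ 2 * a + b ^ 2 * c + c ^ 2 * a + c ^ 2 * b) - 9 * a * b * c

/-- The form equal to `9 * (a ^ 2 + b ^ 2 + c ^ 2) ^ 2 * dist X2 X6 ^ 2` on triangles with side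
lengths `a, b, c`. -/
def symmedianForm (a b c : ℝ) : ℝ :=
  -(a ^ 6 + b ^ 6 + c ^ 6)
    + 3 * (a ^ 4 * b ^ 2 + a ^ 4 * c ^ 2 + b ^ 4 * a ^ 2 + b ^ 4 * c ^ 2 + c ^ 4 * a ^ 2
      + c ^ 4 * b ^ 2) - 15 * a ^ 2 * b ^ 2 * c ^ 2

lemma incenterForm_rotate (a b c : ℝ) : incenterForm b c a = incenterForm a b c := by
  unfold incenterForm
  ring

lemma symmedianForm_rotate (a b c : ℝ) : symmedianForm b c a = symmedianForm a b c := by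
  unfold symmedianForm
  ring

section Distances

lemma dist_le_dist_add_dist_rotate {X : Type*} [PseudoMetricSpace X] (A B C : X) :
    dist B C ≤ dist C A + dist A B := by
  rw [add_comm, dist_comm A B, dist_comm C A]
  exact dist_triangle B A C

lemma sum_dist_pow_pos {X : Type*} [MetricSpace X] {A B C : X} (h : ¬(A = B ∧ B = C)) (n : ℕ) :
    0 < dist B C ^ n + dist C A ^ n + dist A B ^ n := by
  rcases not_and_or.mp h with hAB | hBC
  · have := dist_pos.mpr hAB
    positivity
  · have := dist_pos.mpr hBC
    positivity

variable {V : Type*} [NormedAddCommGroup V] [InnerProductSpace ℝ V]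

lemma dist_centerMass_sq {ι : Type*} (s : Finset ι) (p : ι → V) {v w : ι → ℝ}
    (hv : ∑ i ∈ s, v i ≠ 0) (hw : ∑ i ∈ s, w i ≠ 0) :
    dist (s.centerMass v p) (s.centerMass w p) ^ 2 =
      -(∑ i ∈ s, ∑ j ∈ s, (v i / (∑ k ∈ s, v k) - w i / (∑ k ∈ s, w k)) *
        (v j / (∑ k ∈ s, v k) - w j / (∑ k ∈ s, w k)) * dist (p i) (p j) ^ 2) / 2 := by
  have sum_normalized {u : ι → ℝ} (hu : ∑ i ∈ s, u i ≠ 0) :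
      ∑ i ∈ s, u i / ∑ k ∈ s, u k = 1 := by
    rw [← Finset.sum_div, div_self hu]
  have eq_affineCombination {u : ι → ℝ} (hu : ∑ i ∈ s, u i ≠ 0) :
      s.centerMass u p = s.affineCombination ℝ p (fun i ↦ u i / ∑ k ∈ s, u k) := by
    rw [affineCombination_eq_centerMass (sum_normalized hu),
      ← Finset.centerMass_smul_left (hc := inv_ne_zero hu)]
    simp only [Pi.smul_def, smul_eq_mul, div_eq_inv_mul]
  rw [eq_affineCombination hv, eq_affineCombination hw, sq,
    EuclideanGeometry.dist_affineCombination p (sum_normalized hv) (sum_normalized hw)]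
  simp only [Pi.sub_apply, sq]

lemma dist_centroid_centerMass_sq (A B C : V) {x y z : ℝ} (h : x + y + z ≠ 0) :
    9 * (x + y + z) ^ 2 * dist (Finset.univ.centerMass ![(1 : ℝ), 1, 1] ![A, B, C])
        (Finset.univ.centerMass ![x, y, z] ![A, B, C]) ^ 2 =
      -((2 * y - z - x) * (2 * z - x - y) * dist B C ^ 2
        + (2 * z - x - y) * (2 * x - y - z) * dist C A ^ 2
        + (2 * x - y - z) * (2 * y - z - x) * dist A B ^ 2) := by
  rw [dist_centerMass_sq _ _ (by norm_num [Fin.sum_univ_succ])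
    (by simpa [Fin.sum_univ_three] using h)]
  simp only [Fin.sum_univ_three, Matrix.cons_val, dist_self, dist_comm B A, dist_comm A C,
    dist_comm C B]
  field_simp
  ring

variable {A B C : V}

lemma dist_centroid_incenter_sq (h : ¬(A = B ∧ B = C)) :
    9 * (dist B C + dist C A + dist A B) *
        dist (triangleCenter (fun _ _ _ ↦ 1) A B C) (triangleCenter (fun a _ _ ↦ a) A B C) ^ 2 =
      incenterForm (dist B C) (dist C A) (dist A B) := by
  have hs : dist B C + dist C A + dist A B ≠ 0 := by simpa using (sum_dist_pow_pos h 1).ne'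
  apply mul_left_cancel₀ hs
  unfold triangleCenter incenterForm
  linear_combination dist_centroid_centerMass_sq A B C hs

lemma dist_centroid_symmedian_sq (h : ¬(A = B ∧ B = C)) :
    9 * (dist B C ^ 2 + dist C A ^ 2 + dist A B ^ 2) ^ 2 *
        dist (triangleCenter (fun _ _ _ ↦ 1) A B C)
          (triangleCenter (fun a _ _ ↦ a ^ 2) A B C) ^ 2 =
      symmedianForm (dist B C) (dist C A) (dist A B) := by
  unfold triangleCenter symmedianForm
  linear_combination dist_centroid_centerMass_sq A B C (sum_dist_pow_pos h 2).ne'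

end Distances

section Forms

/-- The factor of `d ^ 2` in `incenterForm a b c * (a ^ 2 + b ^ 2 + c ^ 2) ^ 2` once its value on
the isosceles triangle `d = 0` is subtracted, where `a, b = e + f ± d` and `c = 2 * e + f`. -/
def incenterRemainder (d e f : ℝ) : ℝ :=
  (16 * e + 3 * f) * (6 * e ^ 2 + 8 * e * f + 3 * f ^ 2 + 2 * d ^ 2) ^ 2
    + 4 * e ^ 2 * f * (6 * e ^ 2 + 8 * e * f + 3 * f ^ 2 + d ^ 2)

/-- The analogue of `incenterRemainder` for `symmedianForm a b c * (a + b + c)`. -/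
def symmedianRemainder (d e f : ℝ) : ℝ :=
  (4 * e + 3 * f) *
    (6 * ((2 * e + f) ^ 4 + 11 * (2 * e + f) ^ 2 * (e + f) ^ 2 - 6 * (e + f) ^ 4)
      - 9 * d ^ 2 * (4 * (e + f) ^ 2 + (2 * e + f) ^ 2) + 4 * d ^ 4)

variable {d e f : ℝ}

lemma incenterForm_eq_isosceles_add_remainder :
    incenterForm (e + f + d) (e + f - d) (2 * e + f) *
        ((e + f + d) ^ 2 + (e + f - d) ^ 2 + (2 * e + f) ^ 2) ^ 2 =
      e ^ 2 * f * (6 * e ^ 2 + 8 * e * f + 3 * f ^ 2) ^ 2 + d ^ 2 * incenterRemainder d e f := by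
  unfold incenterForm incenterRemainder
  ring

lemma symmedianForm_eq_isosceles_add_remainder :
    symmedianForm (e + f + d) (e + f - d) (2 * e + f) *
        ((e + f + d) + (e + f - d) + (2 * e + f)) =
      e ^ 2 * f * ((4 * e + 3 * f) * (3 * e + 2 * f)) ^ 2 + d ^ 2 * symmedianRemainder d e f := by
  unfold symmedianForm symmedianRemainder
  ring

lemma incenterRemainder_nonneg (he : 0 ≤ e) (hf : 0 ≤ f) : 0 ≤ incenterRemainder d e f := by
  unfold incenterRemainder
  positivity

lemma symmedianRemainder_le_four_mul_incenterRemainder (he : 0 ≤ e) (hf : 0 ≤ f) :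
    symmedianRemainder d e f ≤ 4 * incenterRemainder d e f := by
  have nonneg : 0 ≤ 108 * e * f ^ 4 + 762 * e ^ 2 * f ^ 3 + 2016 * e ^ 3 * f ^ 2
      + 2340 * e ^ 4 * f + 1008 * e ^ 5
      + d ^ 2 * (279 * f ^ 3 + 1656 * e * f ^ 2 + 3000 * e ^ 2 * f + 1824 * e ^ 3)
      + d ^ 4 * (36 * f + 240 * e) := by positivity
  unfold symmedianRemainder incenterRemainder
  linear_combination nonneg

lemma incenterRemainder_le_symmedianRemainder (he : 0 ≤ e) (hf : 0 ≤ f) (hd : d ^ 2 ≤ e ^ 2) :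
    incenterRemainder d e f ≤ symmedianRemainder d e f := by
  have : 0 ≤ e ^ 2 - d ^ 2 := sub_nonneg.mpr hd
  have nonneg : 0 ≤ 81 * f ^ 5 + 756 * e * f ^ 4 + 2307 * e ^ 2 * f ^ 3 + 2952 * e ^ 3 * f ^ 2
      + 1428 * e ^ 4 * f + (e ^ 2 - d ^ 2) *
        (171 * f ^ 3 + 792 * e * f ^ 2 + 1236 * e ^ 2 * f + 48 * e * (15 * e ^ 2 + d ^ 2)) := by
    positivity
  unfold incenterRemainder symmedianRemainder
  linear_combination nonneg

lemma six_mul_sqrt_two_sub_eight_nonneg : 0 ≤ 6 * √2 - 8 := by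
  have : 4 / 3 ≤ √2 := Real.le_sqrt_of_sq_le (by norm_num)
  linarith

lemma sqrt_two_le_seventeen_div_twelve : √2 ≤ 17 / 12 := Real.sqrt_le_iff.mpr (by norm_num)

lemma four_mul_six_mul_sqrt_two_sub_eight_sq_le_one : 4 * (6 * √2 - 8) ^ 2 ≤ 1 := by
  have le_half : 6 * √2 - 8 ≤ 1 / 2 := by linarith [sqrt_two_le_seventeen_div_twelve]
  have := pow_le_pow_left₀ six_mul_sqrt_two_sub_eight_nonneg le_half 2
  linarith

lemma isosceles_lower_bound (e f : ℝ) :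
    (6 * √2 - 8) * ((4 * e + 3 * f) * (3 * e + 2 * f)) ≤ 6 * e ^ 2 + 8 * e * f + 3 * f ^ 2 := by
  have nonneg : 0 ≤ (51 - 36 * √2) * (f - √2 * e) ^ 2 :=
    mul_nonneg (by linarith [sqrt_two_le_seventeen_div_twelve]) (sq_nonneg _)
  have sq_sqrt_two : √2 ^ 2 = 2 := Real.sq_sqrt zero_le_two
  linear_combination nonneg + (72 * e * f + 51 * e ^ 2 - 36 * √2 * e ^ 2) * sq_sqrt_two

lemma const_sq_mul_symmedianForm_mul_le_incenterForm_mul (he : 0 ≤ e) (hf : 0 ≤ f) :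
    (6 * √2 - 8) ^ 2 * (symmedianForm (e + f + d) (e + f - d) (2 * e + f) *
        ((e + f + d) + (e + f - d) + (2 * e + f))) ≤
      incenterForm (e + f + d) (e + f - d) (2 * e + f) *
        ((e + f + d) ^ 2 + (e + f - d) ^ 2 + (2 * e + f) ^ 2) ^ 2 := by
  rw [incenterForm_eq_isosceles_add_remainder, symmedianForm_eq_isosceles_add_remainder]
  have isosceles_part : ((6 * √2 - 8) * ((4 * e + 3 * f) * (3 * e + 2 * f))) ^ 2 ≤
      (6 * e ^ 2 + 8 * e * f + 3 * f ^ 2) ^ 2 :=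
    pow_le_pow_left₀ (mul_nonneg six_mul_sqrt_two_sub_eight_nonneg (by positivity))
      (isosceles_lower_bound e f) 2
  have remainder_part : (6 * √2 - 8) ^ 2 * symmedianRemainder d e f ≤ incenterRemainder d e f :=
    calc (6 * √2 - 8) ^ 2 * symmedianRemainder d e f
      _ ≤ (6 * √2 - 8) ^ 2 * (4 * incenterRemainder d e f) := by
        gcongr
        exact symmedianRemainder_le_four_mul_incenterRemainder he hf
      _ = 4 * (6 * √2 - 8) ^ 2 * incenterRemainder d e f := by ring
      _ ≤ incenterRemainder d e f :=
        mul_le_of_le_one_left (incenterRemainder_nonneg he hf)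
          four_mul_six_mul_sqrt_two_sub_eight_sq_le_one
  linear_combination e ^ 2 * f * isosceles_part + d ^ 2 * remainder_part

lemma incenterForm_mul_le_symmedianForm_mul (he : 0 ≤ e) (hf : 0 ≤ f) (hd : d ^ 2 ≤ e ^ 2) :
    incenterForm (e + f + d) (e + f - d) (2 * e + f) *
        ((e + f + d) ^ 2 + (e + f - d) ^ 2 + (2 * e + f) ^ 2) ^ 2 ≤
      symmedianForm (e + f + d) (e + f - d) (2 * e + f) *
        ((e + f + d) + (e + f - d) + (2 * e + f)) := by
  rw [incenterForm_eq_isosceles_add_remainder, symmedianForm_eq_isosceles_add_remainder]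
  have isosceles_upper_bound :
      6 * e ^ 2 + 8 * e * f + 3 * f ^ 2 ≤ (4 * e + 3 * f) * (3 * e + 2 * f) := by
    have : 0 ≤ 6 * e ^ 2 + 9 * e * f + 3 * f ^ 2 := by positivity
    linear_combination this
  gcongr
  exact incenterRemainder_le_symmedianRemainder he hf hd

variable {a b c : ℝ}

lemma incenterForm_mul_mem_Icc_of_longest (ha : a ≤ c) (hb : b ≤ c) (hc : c ≤ a + b) :
    incenterForm a b c * (a ^ 2 + b ^ 2 + c ^ 2) ^ 2 ∈
      Set.Icc ((6 * √2 - 8) ^ 2 * (symmedianForm a b c * (a + b + c)))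
        (symmedianForm a b c * (a + b + c)) := by
  obtain ⟨d, e, f, rfl, rfl, rfl⟩ : ∃ d e f, a = e + f + d ∧ b = e + f - d ∧ c = 2 * e + f :=
    ⟨(a - b) / 2, c - (a + b) / 2, a + b - c, by ring, by ring, by ring⟩
  have he : 0 ≤ e := by linarith
  have hf : 0 ≤ f := by linarith
  have hd : d ^ 2 ≤ e ^ 2 := sq_le_sq' (by linarith) (by linarith)
  exact ⟨const_sq_mul_symmedianForm_mul_le_incenterForm_mul he hf,
    incenterForm_mul_le_symmedianForm_mul he hf hd⟩

lemma incenterForm_mul_mem_Icc (ha : a ≤ b + c) (hb : b ≤ c + a) (hc : c ≤ a + b) :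
    incenterForm a b c * (a ^ 2 + b ^ 2 + c ^ 2) ^ 2 ∈
      Set.Icc ((6 * √2 - 8) ^ 2 * (symmedianForm a b c * (a + b + c)))
        (symmedianForm a b c * (a + b + c)) := by
  have longest : (a ≤ c ∧ b ≤ c) ∨ (b ≤ a ∧ c ≤ a) ∨ (c ≤ b ∧ a ≤ b) := by grind
  rcases longest with ⟨hac, hbc⟩ | ⟨hba, hca⟩ | ⟨hcb, hab⟩
  · exact incenterForm_mul_mem_Icc_of_longest hac hbc hc
  · rw [← incenterForm_rotate, ← symmedianForm_rotate, add_rotate a, add_rotate (a ^ 2)]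
    exact incenterForm_mul_mem_Icc_of_longest hba hca ha
  · rw [incenterForm_rotate c a b, symmedianForm_rotate c a b, ← add_rotate c, ← add_rotate (c ^ 2)]
    exact incenterForm_mul_mem_Icc_of_longest hcb hab hb

end Forms

theorem stmt_10_general {V : Type*} [NormedAddCommGroup V] [InnerProductSpace ℝ V] {A B C : V}
    (h : ¬(A = B ∧ B = C)) :
    (6 * √2 - 8) * dist (triangleCenter (fun _ _ _ ↦ 1) A B C)
        (triangleCenter (fun a _ _ ↦ a ^ 2) A B C) ≤
      dist (triangleCenter (fun _ _ _ ↦ 1) A B C) (triangleCenter (fun a _ _ ↦ a) A B C) ∧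
    dist (triangleCenter (fun _ _ _ ↦ 1) A B C) (triangleCenter (fun a _ _ ↦ a) A B C) ≤
      dist (triangleCenter (fun _ _ _ ↦ 1) A B C)
        (triangleCenter (fun a _ _ ↦ a ^ 2) A B C) := by
  obtain ⟨lower, upper⟩ := incenterForm_mul_mem_Icc (dist_le_dist_add_dist_rotate A B C)
    (dist_le_dist_add_dist_rotate B C A) (dist_le_dist_add_dist_rotate C A B)
  rw [← dist_centroid_incenter_sq h, ← dist_centroid_symmedian_sq h] at lower upper
  have perimeter_pos : 0 < dist B C + dist C A + dist A B := by simpa using sum_dist_pow_pos h 1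
  have scale_pos : 0 < 9 * (dist B C + dist C A + dist A B) *
      (dist B C ^ 2 + dist C A ^ 2 + dist A B ^ 2) ^ 2 :=
    mul_pos (by positivity) (pow_pos (sum_dist_pow_pos h 2) 2)
  constructor
  · rw [← sq_le_sq₀ (mul_nonneg six_mul_sqrt_two_sub_eight_nonneg dist_nonneg) dist_nonneg]
    refine le_of_mul_le_mul_left ?_ scale_pos
    linear_combination lower
  · rw [← sq_le_sq₀ dist_nonneg dist_nonneg]
    refine le_of_mul_le_mul_left ?_ scale_pos
    linear_combination upper

theorem stmt_10 (A B C : EuclideanSpace ℝ (Fin 2))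
    (h : AffineIndependent ℝ ![A, B, C]) :
    (6 * Real.sqrt 2 - 8) * dist (tcenter (fun a b c => (1:Real)) A B C) (tcenter (fun a b c => a^2) A B C) ≤ dist (tcenter (fun a b c => (1:Real)) A B C) (tcenter (fun a b c => a) A B C) ∧
      dist (tcenter (fun a b c => (1:Real)) A B C) (tcenter (fun a b c => a) A B C) ≤ dist (tcenter (fun a b c => (1:Real)) A B C) (tcenter (fun a b c => a^2) A B C) := by
  rw [tcenter_eq_triangleCenter]
  exact stmt_10_general fun hABC ↦ h.injective.ne (by decide : (1 : Fin 3) ≠ 2) hABC.2
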